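/- arXiv:gr-qc/0310040 — 2 statements merged into one kernel-verified Lean document; each statement's English description precedes it below -/
import Mathlib

section
/- Let (r, m, φ) be a solution on D satisfying the characteristic initial conditions with parameters C, M, m₀, and assume R > 2M. Then ν < 0 and λ > 0 at every point of D. -/
/-!
Since `2m ≠ r` on all of `D`, the equations for `∂λ/∂u` and `∂ν/∂v` are linear homogeneous
transport equations `∂λ/∂u = K λ`, `∂ν/∂v = L ν` with coefficients `K`, `L` continuous on `D`.
By Grönwall's inequality a solution vanishing at one point of a characteristic segment vanishes
on the rest of it, so `λ` and `ν` keep the sign they have on the initial rays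
(`transport_same_sign`). The segments joining a point of `D` to the initial rays lie in `D`
because `D` is a past set.
-/

open Set Real

noncomputable section

/-- The quadrant `Q_R = (-∞, -R] × [R, ∞)` in null coordinates `(u, v)`. -/
def Quad (R : ℝ) : Set (ℝ × ℝ) := Iic (-R) ×ˢ Ici R

/-- Partial derivative in the `u` (first) direction, within the set `D`. -/
def pdu (D : Set (ℝ × ℝ)) (f : ℝ × ℝ → ℝ) (p : ℝ × ℝ) : ℝ :=
  fderivWithin ℝ f D p (1, 0)

/-- Partial derivative in the `v` (second) direction, within the set `D`. -/
def pdv (D : Set (ℝ × ℝ)) (f : ℝ × ℝ → ℝ) (p : ℝ × ℝ) : ℝ :=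
  fderivWithin ℝ f D p (0, 1)

/-- `D` is a past set in `Q_R`: with `(u,v) ∈ D`, any `(ũ,ṽ) ∈ Q_R` with
`ũ ≥ u`, `ṽ ≤ v` lies in `D`. -/
def IsPastSet (R : ℝ) (D : Set (ℝ × ℝ)) : Prop :=
  ∀ p ∈ D, ∀ q ∈ Quad R, p.1 ≤ q.1 → q.2 ≤ p.2 → q ∈ D

/-- A solution of the spherically symmetric Einstein–scalar field system on a
relatively open subset `D ⊆ Q_R`.  Writing `ν = ∂r/∂u`, `λ = ∂r/∂v`,
`ζ = r ∂φ/∂u`, `θ = r ∂φ/∂v`, `μ = 2m/r`, the equations are: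
`∂λ/∂u = λ (2ν/(1-μ)) (m/r²)`, `∂ν/∂v = ν (2λ/(1-μ)) (m/r²)`,
`ν ∂m/∂u = ½(1-μ)ζ²`, `λ ∂m/∂v = ½(1-μ)θ²`,
`∂θ/∂u = -ζλ/r`, `∂ζ/∂v = -θν/r`. -/
structure EFSol (R : ℝ) (D : Set (ℝ × ℝ)) (r m φ : ℝ × ℝ → ℝ) : Prop where
  subset : D ⊆ Quad R
  relOpen : ∃ U : Set (ℝ × ℝ), IsOpen U ∧ D = U ∩ Quad R
  hr : ContDiffOn ℝ 2 r D
  hm : ContDiffOn ℝ 2 m D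
  hphi : ContDiffOn ℝ 2 φ D
  rpos : ∀ p ∈ D, 0 < r p
  mu_ne : ∀ p ∈ D, 2 * m p ≠ r p
  eq_lam : ∀ p ∈ D, pdu D (fun q => pdv D r q) p
      = pdv D r p * (2 * pdu D r p / (1 - 2 * m p / r p)) * (m p / (r p) ^ 2)
  eq_nu : ∀ p ∈ D, pdv D (fun q => pdu D r q) p
      = pdu D r p * (2 * pdv D r p / (1 - 2 * m p / r p)) * (m p / (r p) ^ 2)
  eq_mu : ∀ p ∈ D, pdu D r p * pdu D m p
      = (1 / 2) * (1 - 2 * m p / r p) * (r p * pdu D φ p) ^ 2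
  eq_mv : ∀ p ∈ D, pdv D r p * pdv D m p
      = (1 / 2) * (1 - 2 * m p / r p) * (r p * pdv D φ p) ^ 2
  eq_theta : ∀ p ∈ D, pdu D (fun q => r q * pdv D φ q) p
      = -(r p * pdu D φ p) * pdv D r p / r p
  eq_zeta : ∀ p ∈ D, pdv D (fun q => r q * pdu D φ q) p
      = -(r p * pdv D φ p) * pdu D r p / r p

/-- Characteristic initial conditions with parameters `C`, `M`, `m₀`, posed on the
rays `{-R} × [R,∞)` (where `λ = 1`, `|rφ| ≤ C`, `m ≤ M`) and
`(-∞,-R] × {R}` (where `ν = -1`, `|∂_u(rφ)| ≤ C/u²`, `m ≤ M`), with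
`r(-R,R) = R` and `m(-R,R) = m₀`, on a past set `D`. -/
structure CharIC (R C M m₀ : ℝ) (D : Set (ℝ × ℝ)) (r m φ : ℝ × ℝ → ℝ) : Prop where
  past : IsPastSet R D
  ray_out : ∀ v ≥ R, ((-R, v) : ℝ × ℝ) ∈ D
  ray_in : ∀ u ≤ -R, ((u, R) : ℝ × ℝ) ∈ D
  r_corner : r (-R, R) = R
  m_corner : m (-R, R) = m₀
  lam_one : ∀ v ≥ R, pdv D r (-R, v) = 1
  rphi_bound : ∀ v ≥ R, |r (-R, v) * φ (-R, v)| ≤ C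
  m_bound_out : ∀ v ≥ R, m (-R, v) ≤ M
  nu_one : ∀ u ≤ -R, pdu D r (u, R) = -1
  durphi_bound : ∀ u ≤ -R, |pdu D (fun q => r q * φ q) (u, R)| ≤ C / u ^ 2
  m_bound_in : ∀ u ≤ -R, m (u, R) ≤ M

end

open Set Real

/-- A function satisfying a linear homogeneous transport equation with continuous coefficient
along the segment from `p` to `q` has the same sign at `p` as at `q`. -/
lemma transport_same_sign {D : Set (ℝ × ℝ)} {F K : ℝ × ℝ → ℝ} {p q : ℝ × ℝ}
    (hseg : ∀ t ∈ Icc (0 : ℝ) 1, p + t • (q - p) ∈ D)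
    (hF : DifferentiableOn ℝ F D) (hK : ContinuousOn K D)
    (h : ∀ x ∈ D, fderivWithin ℝ F D x (q - p) = K x * F x)
    (hq : F q ≠ 0) : 0 < F p * F q := by
  set γ : ℝ → ℝ × ℝ := fun t => p + t • (q - p) with hγ
  have hγc : Continuous γ := by fun_prop
  have hmaps : MapsTo γ (Icc 0 1) D := hseg
  have hγ0 : γ 0 = p := by simp [hγ]
  have hγ1 : γ 1 = q := by simp [hγ]
  have hg : ContinuousOn (F ∘ γ) (Icc 0 1) := hF.continuousOn.comp hγc.continuousOn hmaps
  by_contra! hneg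
  obtain ⟨t, ht, ht0⟩ : (0 : ℝ) ∈ (fun t => (F ∘ γ) t * F q) '' Icc 0 1 := by
    refine intermediate_value_Icc zero_le_one (hg.mul continuousOn_const) ⟨?_, ?_⟩
    · simpa [hγ0] using hneg
    · simpa [hγ1] using mul_self_nonneg (F q)
  have ht0 : (F ∘ γ) t = 0 := (mul_eq_zero.mp ht0).resolve_right hq
  obtain ⟨B, hB⟩ := isCompact_Icc.exists_bound_of_continuousOn
    (hK.comp hγc.continuousOn hmaps)
  have hsub : Icc t 1 ⊆ Icc 0 1 := Icc_subset_Icc_left ht.1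
  have hderiv : ∀ s ∈ Icc (0 : ℝ) 1,
      HasDerivWithinAt (F ∘ γ) (K (γ s) * F (γ s)) (Icc 0 1) s := by
    intro s hs
    have h1 : HasDerivWithinAt γ (q - p) (Icc 0 1) s := by
      simpa [hγ] using (((hasDerivAt_id s).smul_const (q - p)).const_add p).hasDerivWithinAt
    rw [← h _ (hmaps hs)]
    exact (hF _ (hmaps hs)).hasFDerivWithinAt.comp_hasDerivWithinAt s h1 hmaps
  have hgr := norm_le_gronwallBound_of_norm_deriv_right_le (δ := 0) (ε := 0) (K := B)
    (f := F ∘ γ) (f' := fun s => K (γ s) * F (γ s)) (a := t) (b := 1) (hg.mono hsub)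
    (fun s hs => ((hderiv s (hsub (Ico_subset_Icc_self hs))).mono_of_mem_nhdsWithin
      (Icc_mem_nhdsGE_of_mem ⟨ht.1.trans hs.1, hs.2⟩)))
    (by simpa using ht0)
    (fun s hs => by
      have := hB s (hsub (Ico_subset_Icc_self hs))
      simp only [norm_mul, add_zero, Function.comp_apply] at this ⊢
      gcongr)
    1 ⟨ht.2, le_rfl⟩
  rw [gronwallBound_ε0_δ0] at hgr
  exact hq (by simpa [hγ1] using hgr)

/-- For a solution on `D` satisfying the characteristic initial
conditions with parameters `C`, `M`, `m₀`, assuming `R > 2M`, one has `ν < 0`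
and `λ > 0` at every point of `D`. -/
theorem nu_neg_lam_pos (R C M m₀ : ℝ) (hR : 0 < R) (hC : 0 < C) (hM : 0 < M)
    (hm₀ : m₀ ∈ Icc 0 M) (hRM : R > 2 * M) (D : Set (ℝ × ℝ))
    (r m φ : ℝ × ℝ → ℝ) (hsol : EFSol R D r m φ)
    (hic : CharIC R C M m₀ D r m φ) :
    ∀ p ∈ D, pdu D r p < 0 ∧ 0 < pdv D r p := by
  have hU : UniqueDiffOn ℝ D := by
    obtain ⟨U, hU, rfl⟩ := hsol.relOpen
    rw [inter_comm]
    exact ((uniqueDiffOn_Iic _).prod (uniqueDiffOn_Ici _)).inter hU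
  have hfd : ContDiffOn ℝ 1 (fderivWithin ℝ r D) D :=
    hsol.hr.fderivWithin hU (by norm_num)
  have hu : ContDiffOn ℝ 1 (pdu D r) D := hfd.clm_apply contDiffOn_const
  have hv : ContDiffOn ℝ 1 (pdv D r) D := hfd.clm_apply contDiffOn_const
  have hrc := hsol.hr.continuousOn
  have hmc := hsol.hm.continuousOn
  have hr0 : ∀ x ∈ D, r x ≠ 0 := fun x hx => (hsol.rpos x hx).ne'
  have hmu : ∀ x ∈ D, 1 - 2 * m x / r x ≠ 0 := by
    intro x hx h
    apply hsol.mu_ne x hx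
    have := hr0 x hx
    field_simp at h
    linarith
  -- continuity of the coefficient `(2 f / (1 - μ)) (m / r²)`, used with `f = ν` and `f = λ`
  have hcoef : ∀ f : ℝ × ℝ → ℝ, ContinuousOn f D →
      ContinuousOn (fun x => (2 * f x / (1 - 2 * m x / r x)) * (m x / (r x) ^ 2)) D := by
    intro f hf
    exact ((continuousOn_const.mul hf).div
      (continuousOn_const.sub ((continuousOn_const.mul hmc).div hrc hr0)) hmu).mul
      (hmc.div (hrc.pow 2) fun x hx => pow_ne_zero 2 (hr0 x hx))
  rintro ⟨u, v⟩ hp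
  obtain ⟨hu0 : u ≤ -R, hv0 : R ≤ v⟩ := hsol.subset hp
  constructor
  · have key := transport_same_sign (p := (u, v)) (q := (u, R)) (F := pdu D r)
      (K := fun x => (R - v) *
        ((2 * pdv D r x / (1 - 2 * m x / r x)) * (m x / (r x) ^ 2)))
      (fun t ht => by
        refine hic.past _ hp _ ⟨?_, ?_⟩ ?_ ?_
        · simpa using hu0
        · simp only [mem_Ici, Prod.snd_add, Prod.smul_snd, Prod.snd_sub, smul_eq_mul]
          nlinarith [ht.2]
        · simp
        · simp only [Prod.snd_add, Prod.smul_snd, Prod.snd_sub, smul_eq_mul]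
          nlinarith [ht.1])
      (hu.differentiableOn one_ne_zero)
      (continuousOn_const.mul (hcoef _ hv.continuousOn))
      (fun x hx => by
        have e : ((u, R) : ℝ × ℝ) - (u, v) = (R - v) • ((0, 1) : ℝ × ℝ) := by simp
        have := hsol.eq_nu x hx
        rw [pdv] at this
        rw [e, map_smul, smul_eq_mul, this]
        ring)
      (by rw [hic.nu_one u hu0]; norm_num)
    rw [hic.nu_one u hu0] at key
    linarith
  · have key := transport_same_sign (p := (u, v)) (q := (-R, v)) (F := pdv D r)
      (K := fun x => (-R - u) *
        ((2 * pdu D r x / (1 - 2 * m x / r x)) * (m x / (r x) ^ 2)))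
      (fun t ht => by
        refine hic.past _ hp _ ⟨?_, ?_⟩ ?_ ?_
        · simp only [mem_Iic, Prod.fst_add, Prod.smul_fst, Prod.fst_sub, smul_eq_mul]
          nlinarith [ht.2]
        · simpa using hv0
        · simp only [Prod.fst_add, Prod.smul_fst, Prod.fst_sub, smul_eq_mul]
          nlinarith [ht.1]
        · simp)
      (hv.differentiableOn one_ne_zero)
      (continuousOn_const.mul (hcoef _ hu.continuousOn))
      (fun x hx => by
        have e : ((-R, v) : ℝ × ℝ) - (u, v) = (-R - u) • ((1, 0) : ℝ × ℝ) := by simp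
        have := hsol.eq_lam x hx
        rw [pdu] at this
        rw [e, map_smul, smul_eq_mul, this]
        ring)
      (by rw [hic.lam_one v hv0]; norm_num)
    rw [hic.lam_one v hv0] at key
    linarith
end

section
/- Let (r, m, φ) be a solution on D satisfying the characteristic initial conditions with parameters C, M, m₀, and assume R > 2M. Then throughout D the following inequalities hold: r ≥ R, m ≥ m₀, ν ≤ −1, λ ≥ 1, and 0 < 1 − μ ≤ 1. -/
/-!
The argument is by monotonicity along characteristics.

* `D` is a past set, hence connected (every point is joined to the corner `(-R, R)` inside `D` by
  two characteristic segments), and `1 - μ` has no zero on `D`; since `R > 2M` it is positive at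
  the corner, so it is positive on `D`.
* For fixed `u`, `ν` solves a linear homogeneous ODE in `v` with continuous coefficient, starting
  from `-1`; for fixed `v`, `λ` solves one in `u`, starting from `1`. A solution of such an equation
  which vanishes at one point vanishes identically (`ne_zero_of_linear_ode`), so `ν < 0 < λ`.
* The equations for `m` now say `∂m/∂u ≤ 0 ≤ ∂m/∂v`, and likewise `∂r/∂u ≤ 0 ≤ ∂r/∂v`. A function
  with these signs is minimal at the corner (`corner_le`), so `m ≥ m₀ ≥ 0` and `r ≥ R`, whence
  `1 - μ ≤ 1`.
* With `m ≥ 0` the wave equation for `r` gives `∂ν/∂v ≤ 0` and `∂λ/∂u ≤ 0`, which propagates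
  `ν = -1` and `λ = 1` from the initial rays to `ν ≤ -1` and `λ ≥ 1`.
-/

open Set Real

open Set Real

/-! ### Functions of one variable -/

lemma monotoneOn_Icc_of_hasDerivWithinAt {a b : ℝ} {f f' : ℝ → ℝ}
    (hf : ∀ x ∈ Icc a b, HasDerivWithinAt f (f' x) (Icc a b) x)
    (h0 : ∀ x ∈ Icc a b, 0 ≤ f' x) : MonotoneOn f (Icc a b) :=
  monotoneOn_of_hasDerivWithinAt_nonneg (convex_Icc a b)
    (fun x hx => (hf x hx).continuousWithinAt)
    (fun x hx => (hf x (interior_subset hx)).mono interior_subset)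
    (fun x hx => h0 x (interior_subset hx))

lemma antitoneOn_Icc_of_hasDerivWithinAt {a b : ℝ} {f f' : ℝ → ℝ}
    (hf : ∀ x ∈ Icc a b, HasDerivWithinAt f (f' x) (Icc a b) x)
    (h0 : ∀ x ∈ Icc a b, f' x ≤ 0) : AntitoneOn f (Icc a b) :=
  antitoneOn_of_hasDerivWithinAt_nonpos (convex_Icc a b)
    (fun x hx => (hf x hx).continuousWithinAt)
    (fun x hx => (hf x (interior_subset hx)).mono interior_subset)
    (fun x hx => h0 x (interior_subset hx))

/-- With `|k| ≤ K`, the function `f² exp (2Ks)` is nondecreasing and `f² exp (-2Ks)` is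
nonincreasing, so a zero of `f` propagates in both directions. -/
lemma ne_zero_of_linear_ode {a b : ℝ} {f k : ℝ → ℝ}
    (hf : ∀ x ∈ Icc a b, HasDerivWithinAt f (f x * k x) (Icc a b) x)
    (hk : ContinuousOn k (Icc a b)) {c : ℝ} (hc : c ∈ Icc a b) (hfc : f c ≠ 0) :
    ∀ x ∈ Icc a b, f x ≠ 0 := by
  obtain ⟨K, hK⟩ := isCompact_Icc.exists_bound_of_continuousOn hk
  have hder : ∀ L : ℝ, ∀ x ∈ Icc a b, HasDerivWithinAt (fun s => f s ^ 2 * exp (2 * L * s))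
      (2 * (f x ^ 2 * exp (2 * L * x)) * (k x + L)) (Icc a b) x := by
    intro L x hx
    have h1 : HasDerivWithinAt (fun s : ℝ => exp (2 * L * s)) (exp (2 * L * x) * (2 * L))
        (Icc a b) x := by
      simpa using (((hasDerivAt_id x).const_mul (2 * L)).exp).hasDerivWithinAt
    refine (((hf x hx).fun_pow 2).fun_mul h1).congr_deriv ?_
    push_cast
    ring
  have hmono := monotoneOn_Icc_of_hasDerivWithinAt (hder K) (fun x hx => by
    have := (abs_le.mp (hK x hx)).1
    exact mul_nonneg (by positivity) (by linarith))
  have hanti := antitoneOn_Icc_of_hasDerivWithinAt (hder (-K)) (fun x hx => by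
    have := (abs_le.mp (hK x hx)).2
    exact mul_nonpos_of_nonneg_of_nonpos (by positivity) (by linarith))
  intro x hx hx0
  have hpos : ∀ L : ℝ, 0 < f c ^ 2 * exp (2 * L * c) := fun L => by positivity
  rcases le_total c x with h | h
  · have := hmono hc hx h
    simp only [hx0] at this
    linarith [hpos K]
  · have := hanti hx hc h
    simp only [hx0] at this
    linarith [hpos (-K)]

lemma pos_of_linear_ode {a b : ℝ} {f k : ℝ → ℝ}
    (hf : ∀ x ∈ Icc a b, HasDerivWithinAt f (f x * k x) (Icc a b) x)
    (hk : ContinuousOn k (Icc a b)) {c : ℝ} (hc : c ∈ Icc a b) (hfc : 0 < f c) :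
    ∀ x ∈ Icc a b, 0 < f x := by
  intro x hx
  by_contra! hle
  have hcont : ContinuousOn f (Icc a b) := fun y hy => (hf y hy).continuousWithinAt
  obtain ⟨y, hy, hy0⟩ := isPreconnected_Icc.intermediate_value hx hc hcont ⟨hle, hfc.le⟩
  exact ne_zero_of_linear_ode hf hk hc hfc.ne' y hy hy0

/-! ### Past sets and characteristic segments -/

lemma uniqueDiffOn_of_relOpen {R : ℝ} {D : Set (ℝ × ℝ)}
    (h : ∃ U : Set (ℝ × ℝ), IsOpen U ∧ D = U ∩ Quad R) : UniqueDiffOn ℝ D := by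
  obtain ⟨U, hU, rfl⟩ := h
  rw [inter_comm]
  exact ((uniqueDiffOn_Iic _).prod (uniqueDiffOn_Ici _)).inter hU

section Segments

variable {R : ℝ} {D : Set (ℝ × ℝ)} {f : ℝ × ℝ → ℝ}

lemma mem_of_mem_uSeg (hpast : IsPastSet R D) (hsub : D ⊆ Quad R) {u v s : ℝ}
    (hp : (u, v) ∈ D) (hs : s ∈ Icc u (-R)) : (s, v) ∈ D :=
  hpast _ hp _ ⟨hs.2, (hsub hp).2⟩ hs.1 le_rfl

lemma mem_of_mem_vSeg (hpast : IsPastSet R D) (hsub : D ⊆ Quad R) {u v s : ℝ}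
    (hp : (u, v) ∈ D) (hs : s ∈ Icc R v) : (u, s) ∈ D :=
  hpast _ hp _ ⟨(hsub hp).1, hs.1⟩ le_rfl hs.2

lemma hasDerivWithinAt_u (hpast : IsPastSet R D) (hsub : D ⊆ Quad R)
    (hf : DifferentiableOn ℝ f D) {u v : ℝ} (hp : (u, v) ∈ D) :
    ∀ s ∈ Icc u (-R), HasDerivWithinAt (fun t => f (t, v)) (pdu D f (s, v)) (Icc u (-R)) s := by
  intro s hs
  have h1 := (hf _ (mem_of_mem_uSeg hpast hsub hp hs)).hasFDerivWithinAt
  have h2 : HasDerivWithinAt (fun t : ℝ => (t, v)) (1, 0) (Icc u (-R)) s :=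
    ((hasDerivAt_id s).prodMk (hasDerivAt_const s v)).hasDerivWithinAt
  exact h1.comp_hasDerivWithinAt s h2 (fun t ht => mem_of_mem_uSeg hpast hsub hp ht)

lemma hasDerivWithinAt_v (hpast : IsPastSet R D) (hsub : D ⊆ Quad R)
    (hf : DifferentiableOn ℝ f D) {u v : ℝ} (hp : (u, v) ∈ D) :
    ∀ s ∈ Icc R v, HasDerivWithinAt (fun t => f (u, t)) (pdv D f (u, s)) (Icc R v) s := by
  intro s hs
  have h1 := (hf _ (mem_of_mem_vSeg hpast hsub hp hs)).hasFDerivWithinAt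
  have h2 : HasDerivWithinAt (fun t : ℝ => (u, t)) (0, 1) (Icc R v) s :=
    ((hasDerivAt_const s u).prodMk (hasDerivAt_id s)).hasDerivWithinAt
  exact h1.comp_hasDerivWithinAt s h2 (fun t ht => mem_of_mem_vSeg hpast hsub hp ht)

lemma continuousOn_uSeg (hpast : IsPastSet R D) (hsub : D ⊆ Quad R)
    (hf : ContinuousOn f D) {u v : ℝ} (hp : (u, v) ∈ D) :
    ContinuousOn (fun t => f (t, v)) (Icc u (-R)) :=
  hf.comp (by fun_prop) (fun _ ht => mem_of_mem_uSeg hpast hsub hp ht)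

lemma continuousOn_vSeg (hpast : IsPastSet R D) (hsub : D ⊆ Quad R)
    (hf : ContinuousOn f D) {u v : ℝ} (hp : (u, v) ∈ D) :
    ContinuousOn (fun t => f (u, t)) (Icc R v) :=
  hf.comp (by fun_prop) (fun _ ht => mem_of_mem_vSeg hpast hsub hp ht)

lemma left_le_of_pdu_nonpos (hpast : IsPastSet R D) (hsub : D ⊆ Quad R)
    (hf : DifferentiableOn ℝ f D) (hu : ∀ p ∈ D, pdu D f p ≤ 0) {u v : ℝ} (hp : (u, v) ∈ D) :
    f (-R, v) ≤ f (u, v) :=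
  have huR : u ≤ -R := (hsub hp).1
  antitoneOn_Icc_of_hasDerivWithinAt (hasDerivWithinAt_u hpast hsub hf hp)
    (fun _ hs => hu _ (mem_of_mem_uSeg hpast hsub hp hs))
    (left_mem_Icc.2 huR) (right_mem_Icc.2 huR) huR

lemma bottom_le_of_pdv_nonneg (hpast : IsPastSet R D) (hsub : D ⊆ Quad R)
    (hf : DifferentiableOn ℝ f D) (hv : ∀ p ∈ D, 0 ≤ pdv D f p) {u v : ℝ} (hp : (u, v) ∈ D) :
    f (u, R) ≤ f (u, v) :=
  have hRv : R ≤ v := (hsub hp).2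
  monotoneOn_Icc_of_hasDerivWithinAt (hasDerivWithinAt_v hpast hsub hf hp)
    (fun _ hs => hv _ (mem_of_mem_vSeg hpast hsub hp hs))
    (left_mem_Icc.2 hRv) (right_mem_Icc.2 hRv) hRv

lemma le_bottom_of_pdv_nonpos (hpast : IsPastSet R D) (hsub : D ⊆ Quad R)
    (hf : DifferentiableOn ℝ f D) (hv : ∀ p ∈ D, pdv D f p ≤ 0) {u v : ℝ} (hp : (u, v) ∈ D) :
    f (u, v) ≤ f (u, R) :=
  have hRv : R ≤ v := (hsub hp).2
  antitoneOn_Icc_of_hasDerivWithinAt (hasDerivWithinAt_v hpast hsub hf hp)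
    (fun _ hs => hv _ (mem_of_mem_vSeg hpast hsub hp hs))
    (left_mem_Icc.2 hRv) (right_mem_Icc.2 hRv) hRv

lemma corner_le (hpast : IsPastSet R D) (hsub : D ⊆ Quad R)
    (hf : DifferentiableOn ℝ f D) (hu : ∀ p ∈ D, pdu D f p ≤ 0) (hv : ∀ p ∈ D, 0 ≤ pdv D f p) :
    ∀ p ∈ D, f (-R, R) ≤ f p := by
  rintro ⟨u, v⟩ hp
  have huR : u ≤ -R := (hsub hp).1
  exact (bottom_le_of_pdv_nonneg hpast hsub hf hv
    (mem_of_mem_uSeg hpast hsub hp (right_mem_Icc.2 huR))).trans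
    (left_le_of_pdu_nonpos hpast hsub hf hu hp)

/-- A continuous nonvanishing function on a past set, positive at the corner, is positive:
intermediate value theorem along two characteristic segments. -/
lemma pos_of_ne_zero_of_corner (hpast : IsPastSet R D) (hsub : D ⊆ Quad R)
    (hf : ContinuousOn f D) (hne : ∀ p ∈ D, f p ≠ 0) (hcorner : 0 < f (-R, R)) :
    ∀ p ∈ D, 0 < f p := by
  rintro ⟨u, v⟩ hp
  have huR : u ≤ -R := (hsub hp).1
  have hRv : R ≤ v := (hsub hp).2
  have hq := mem_of_mem_uSeg hpast hsub hp (right_mem_Icc.2 huR)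
  have h1 : 0 < f (-R, v) := by
    by_contra! hle
    obtain ⟨y, hy, hy0⟩ := isPreconnected_Icc.intermediate_value (right_mem_Icc.2 hRv)
      (left_mem_Icc.2 hRv) (continuousOn_vSeg hpast hsub hf hq) ⟨hle, hcorner.le⟩
    exact hne _ (mem_of_mem_vSeg hpast hsub hq hy) hy0
  by_contra! hle
  obtain ⟨y, hy, hy0⟩ := isPreconnected_Icc.intermediate_value (left_mem_Icc.2 huR)
    (right_mem_Icc.2 huR) (continuousOn_uSeg hpast hsub hf hp) ⟨hle, h1.le⟩
  exact hne _ (mem_of_mem_uSeg hpast hsub hp hy) hy0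

end Segments

/-! ### The bounds -/

/-- For a solution on `D` satisfying the characteristic initial
conditions with parameters `C`, `M`, `m₀`, assuming `R > 2M`, throughout `D`
one has `r ≥ R`, `m ≥ m₀`, `ν ≤ -1`, `λ ≥ 1` and `0 < 1 - μ ≤ 1`. -/
theorem monotonicity_bounds (R C M m₀ : ℝ) (hR : 0 < R) (hC : 0 < C) (hM : 0 < M)
    (hm₀ : m₀ ∈ Icc 0 M) (hRM : R > 2 * M) (D : Set (ℝ × ℝ))
    (r m φ : ℝ × ℝ → ℝ) (hsol : EFSol R D r m φ)
    (hic : CharIC R C M m₀ D r m φ) :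
    ∀ p ∈ D, R ≤ r p ∧ m₀ ≤ m p ∧ pdu D r p ≤ -1 ∧ 1 ≤ pdv D r p ∧
      0 < 1 - 2 * m p / r p ∧ 1 - 2 * m p / r p ≤ 1 := by
  have hpast := hic.past
  have hsub := hsol.subset
  have hud := uniqueDiffOn_of_relOpen hsol.relOpen
  have hrd : DifferentiableOn ℝ r D := hsol.hr.differentiableOn (by norm_num)
  have hmd : DifferentiableOn ℝ m D := hsol.hm.differentiableOn (by norm_num)
  have hdr : DifferentiableOn ℝ (fderivWithin ℝ r D) D :=
    (hsol.hr.fderivWithin hud (m := 1) (by norm_num)).differentiableOn (by norm_num)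
  have hnud : DifferentiableOn ℝ (fun q => pdu D r q) D :=
    hdr.clm_apply (differentiableOn_const _)
  have hlamd : DifferentiableOn ℝ (fun q => pdv D r q) D :=
    hdr.clm_apply (differentiableOn_const _)
  have hrne : ∀ p ∈ D, r p ≠ 0 := fun p hp => (hsol.rpos p hp).ne'
  have hmuc : ContinuousOn (fun p => 1 - 2 * m p / r p) D :=
    continuousOn_const.sub ((continuousOn_const.mul hmd.continuousOn).div hrd.continuousOn hrne)
  have hmune : ∀ p ∈ D, 1 - 2 * m p / r p ≠ 0 := fun p hp h => by
    have h' : 2 * m p / r p = 1 := by linarith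
    rw [div_eq_one_iff_eq (hrne p hp)] at h'
    exact hsol.mu_ne p hp h'
  have hmupos : ∀ p ∈ D, 0 < 1 - 2 * m p / r p := by
    refine pos_of_ne_zero_of_corner hpast hsub hmuc hmune ?_
    rw [hic.r_corner, hic.m_corner, sub_pos, div_lt_one hR]
    linarith [hm₀.2]
  -- `-ν` solves the same linear equation as `ν` and equals `1` at `v = R`.
  have hnu : ∀ p ∈ D, pdu D r p < 0 := by
    rintro ⟨u, v⟩ hp
    have hRv : R ≤ v := (hsub hp).2
    have hk : ContinuousOn
        (fun p => (2 * pdv D r p / (1 - 2 * m p / r p)) * (m p / (r p) ^ 2)) D :=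
      ((continuousOn_const.mul hlamd.continuousOn).div hmuc hmune).mul
        (hmd.continuousOn.div (hrd.continuousOn.pow 2) (fun p hp => pow_ne_zero 2 (hrne p hp)))
    have hpos := pos_of_linear_ode (f := fun t => -pdu D r (u, t))
      (fun s hs => (hasDerivWithinAt_v hpast hsub hnud hp s hs).fun_neg.congr_deriv
        (by rw [hsol.eq_nu _ (mem_of_mem_vSeg hpast hsub hp hs)]; ring))
      (continuousOn_vSeg hpast hsub hk hp) (left_mem_Icc.2 hRv)
      (by rw [hic.nu_one u (hsub hp).1]; norm_num) v (right_mem_Icc.2 hRv)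
    linarith
  have hlam : ∀ p ∈ D, 0 < pdv D r p := by
    rintro ⟨u, v⟩ hp
    have huR : u ≤ -R := (hsub hp).1
    have hk : ContinuousOn
        (fun p => (2 * pdu D r p / (1 - 2 * m p / r p)) * (m p / (r p) ^ 2)) D :=
      ((continuousOn_const.mul hnud.continuousOn).div hmuc hmune).mul
        (hmd.continuousOn.div (hrd.continuousOn.pow 2) (fun p hp => pow_ne_zero 2 (hrne p hp)))
    exact pos_of_linear_ode (f := fun t => pdv D r (t, v))
      (fun s hs => (hasDerivWithinAt_u hpast hsub hlamd hp s hs).congr_deriv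
        (by rw [hsol.eq_lam _ (mem_of_mem_uSeg hpast hsub hp hs)]; ring))
      (continuousOn_uSeg hpast hsub hk hp) (right_mem_Icc.2 huR)
      (by rw [hic.lam_one v (hsub hp).2]; norm_num) u (left_mem_Icc.2 huR)
  have hmu' : ∀ p ∈ D, pdu D m p ≤ 0 := fun p hp => by
    have h : 0 ≤ pdu D r p * pdu D m p := by
      rw [hsol.eq_mu p hp]
      have := hmupos p hp
      positivity
    by_contra! hpos
    linarith [mul_neg_of_neg_of_pos (hnu p hp) hpos]
  have hmv' : ∀ p ∈ D, 0 ≤ pdv D m p := fun p hp => by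
    have h : 0 ≤ pdv D r p * pdv D m p := by
      rw [hsol.eq_mv p hp]
      have := hmupos p hp
      positivity
    exact nonneg_of_mul_nonneg_right h (hlam p hp)
  have hm_ge : ∀ p ∈ D, m₀ ≤ m p := hic.m_corner ▸ corner_le hpast hsub hmd hmu' hmv'
  have hr_ge : ∀ p ∈ D, r (-R, R) ≤ r p :=
    corner_le hpast hsub hrd (fun p hp => (hnu p hp).le) (fun p hp => (hlam p hp).le)
  rw [hic.r_corner] at hr_ge
  have hm_nn : ∀ p ∈ D, 0 ≤ m p := fun p hp => hm₀.1.trans (hm_ge p hp)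
  have hnuv : ∀ p ∈ D, pdv D (fun q => pdu D r q) p ≤ 0 := fun p hp => by
    rw [hsol.eq_nu p hp, mul_assoc]
    have h1 := hmupos p hp
    have h2 := hlam p hp
    have h3 := hm_nn p hp
    exact mul_nonpos_of_nonpos_of_nonneg (hnu p hp).le (by positivity)
  have hlamu : ∀ p ∈ D, pdu D (fun q => pdv D r q) p ≤ 0 := fun p hp => by
    rw [hsol.eq_lam p hp]
    have h1 := hmupos p hp
    have h2 := hlam p hp
    have h3 := hm_nn p hp
    refine mul_nonpos_of_nonpos_of_nonneg (mul_nonpos_of_nonneg_of_nonpos h2.le ?_)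
      (by positivity)
    exact div_nonpos_of_nonpos_of_nonneg (by linarith [hnu p hp]) h1.le
  rintro ⟨u, v⟩ hp
  refine ⟨hr_ge _ hp, hm_ge _ hp, ?_, ?_, hmupos _ hp, ?_⟩
  · exact hic.nu_one u (hsub hp).1 ▸ le_bottom_of_pdv_nonpos hpast hsub hnud hnuv hp
  · exact hic.lam_one v (hsub hp).2 ▸ left_le_of_pdu_nonpos hpast hsub hlamd hlamu hp
  · have := hm_nn _ hp
    have := hsol.rpos _ hp
    have : 0 ≤ 2 * m (u, v) / r (u, v) := by positivity
    linarith
end
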